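/- arXiv:1511.07148 — 2 statements merged into one kernel-verified Lean document; each statement's English description precedes it below -/
import Mathlib

section
/- Let k ≥ 1 be an integer, let s be a real number with 1/2 ≤ s ≤ 1, let v : Fin k → Bool be a fixed binary vector, and let S be any finite set of binary vectors u : Fin k → Bool with v ∉ S and |S| ≤ k. Then Σ_{u ∈ S} s^(k - d(u,v))·(1-s)^(d(u,v)) ≤ k·s^(k-1)·(1-s), where d denotes Hamming distance. (Hence NearBucket-LSH's choice of the k buckets at Hamming distance 1 from the exact bucket is optimal among any choice of k additional buckets.) -/
open Finset

/-- When `1/2 ≤ s ≤ 1`, a bucket at Hamming distance `d ≥ 1` is at most as likely as one at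
distance `1`. -/
lemma pow_sub_mul_one_sub_pow_le {s : ℝ} (hs₁ : 1 / 2 ≤ s) (hs₂ : s ≤ 1) {k d : ℕ}
    (hd : 1 ≤ d) (hdk : d ≤ k) :
    s ^ (k - d) * (1 - s) ^ d ≤ s ^ (k - 1) * (1 - s) := by
  have h0 : 0 ≤ 1 - s := by linarith
  have hs0 : 0 ≤ s := by linarith
  have hle : 1 - s ≤ s := by linarith
  obtain ⟨e, rfl⟩ := Nat.exists_eq_add_of_le' hd
  calc s ^ (k - (e + 1)) * (1 - s) ^ (e + 1)
      = s ^ (k - (e + 1)) * (1 - s) ^ e * (1 - s) := by ring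
    _ ≤ s ^ (k - (e + 1)) * s ^ e * (1 - s) := by gcongr
    _ = s ^ (k - 1) * (1 - s) := by
      rw [← pow_add, show k - (e + 1) + e = k - 1 by omega]

/-- For `k ≥ 1`, `1/2 ≤ s ≤ 1`, a fixed binary vector `v : Fin k → Bool`, and any
finite set `S` of binary vectors with `v ∉ S` and `|S| ≤ k`, the total success
probability `∑_{u ∈ S} s^(k - d(u,v))·(1-s)^(d(u,v))` is at most
`k·s^(k-1)·(1-s)` — searching the `k` buckets at Hamming distance 1 is optimal. -/
theorem near_buckets_optimal (k : ℕ) (hk : 1 ≤ k) (s : ℝ)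
    (hs₁ : 1/2 ≤ s) (hs₂ : s ≤ 1) (v : Fin k → Bool)
    (S : Finset (Fin k → Bool)) (hv : v ∉ S) (hS : S.card ≤ k) :
    ∑ u ∈ S, s ^ (k - hammingDist u v) * (1 - s) ^ (hammingDist u v) ≤
      (k : ℝ) * (s ^ (k - 1) * (1 - s)) := by
  have hterm : ∀ u ∈ S, s ^ (k - hammingDist u v) * (1 - s) ^ (hammingDist u v) ≤
      s ^ (k - 1) * (1 - s) := fun u hu =>
    pow_sub_mul_one_sub_pow_le hs₁ hs₂
      (hammingDist_pos.2 (ne_of_mem_of_not_mem hu hv))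
      (by simpa using hammingDist_le_card_fintype (x := u) (y := v))
  have h0 : 0 ≤ s ^ (k - 1) * (1 - s) :=
    mul_nonneg (pow_nonneg (by linarith) _) (by linarith)
  calc _ ≤ #S • (s ^ (k - 1) * (1 - s)) := sum_le_card_nsmul _ _ _ hterm
    _ = (#S : ℝ) * (s ^ (k - 1) * (1 - s)) := nsmul_eq_mul _ _
    _ ≤ _ := mul_le_mul_of_nonneg_right (mod_cast hS) h0
end

section
/- Let u and v be nonzero vectors in Euclidean space ℝ^d (d ≥ 2) with angle θ = arccos(⟨u,v⟩/(‖u‖·‖v‖)) between them. If r is distributed according to the uniform (normalized surface) probability measure on the unit sphere of ℝ^d, then the probability of the event { (⟨r, u⟩ > 0) ≠ (⟨r, v⟩ > 0) } equals θ/π. -/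
open scoped InnerProductSpace
open MeasureTheory

section Circle

open Real

/-- A measurable periodic set has the same measure in any two windows of one period. -/
lemma volume_inter_Ioc_eq_of_periodic {T : ℝ} (hT : 0 < T) {p : ℝ → Prop}
    (hp : Function.Periodic p T) (hm : MeasurableSet {t | p t}) (a b : ℝ) :
    volume ({t | p t} ∩ Set.Ioc a (a + T)) = volume ({t | p t} ∩ Set.Ioc b (b + T)) := by
  have : VAddInvariantMeasure (AddSubgroup.zmultiples T) ℝ volume :=
    ⟨fun c s _ => measure_preimage_add _ _ _⟩
  refine IsAddFundamentalDomain.measure_set_eq (G := AddSubgroup.zmultiples T)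
    (isAddFundamentalDomain_Ioc hT a) (isAddFundamentalDomain_Ioc hT b) hm fun g => ?_
  ext x
  exact (hp.map_vadd_zmultiples g x).to_iff

lemma volume_separating_angles {θ : ℝ} (h0 : 0 ≤ θ) (hπ : θ ≤ π) :
    volume ({t : ℝ | ¬(0 < cos t ↔ 0 < cos (t - θ))} ∩ Set.Ioc (-(π / 2)) (-(π / 2) + 2 * π)) =
      ENNReal.ofReal (2 * θ) := by
  have hsplit : ENNReal.ofReal (2 * θ) = ENNReal.ofReal θ + ENNReal.ofReal θ := by
    rw [two_mul, ENNReal.ofReal_add h0 h0]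
  rw [hsplit]
  apply le_antisymm
  · calc _ ≤ volume (Set.Icc (-(π / 2)) (θ - π / 2) ∪ Set.Icc (π / 2) (θ + π / 2)) := by
          refine measure_mono ?_
          rintro t ⟨ht, h1, h2⟩
          by_contra hn
          simp only [Set.mem_union, Set.mem_Icc, not_or, not_and, not_le] at hn
          have hl := hn.1 h1.le
          refine ht ?_
          rcases lt_or_ge t (π / 2) with h | h
          · exact iff_of_true (cos_pos_of_mem_Ioo ⟨h1, h⟩)
              (cos_pos_of_mem_Ioo ⟨by linarith, by linarith⟩)
          · have hr := hn.2 h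
            exact iff_of_false (cos_nonpos_of_pi_div_two_le_of_le h (by linarith)).not_gt
              (cos_nonpos_of_pi_div_two_le_of_le (by linarith) (by linarith)).not_gt
      _ ≤ _ := by
          refine (measure_union_le _ _).trans_eq ?_
          rw [Real.volume_Icc, Real.volume_Icc]
          congr 2 <;> ring
  · calc _ = volume (Set.Ioo (-(π / 2)) (θ - π / 2) ∪ Set.Ioo (π / 2) (θ + π / 2)) := by
          rw [measure_union _ measurableSet_Ioo, Real.volume_Ioo, Real.volume_Ioo]
          · congr 2 <;> ring
          · rw [Set.disjoint_left]
            rintro t ⟨-, h1⟩ ⟨h2, -⟩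
            linarith
      _ ≤ _ := by
          refine measure_mono ?_
          rintro t (⟨h1, h2⟩ | ⟨h1, h2⟩)
          · refine ⟨fun h => ?_, h1, by linarith⟩
            have hneg : cos (t - θ) ≤ 0 := by
              rw [← cos_neg]
              exact cos_nonpos_of_pi_div_two_le_of_le (by linarith) (by linarith)
            exact hneg.not_gt (h.1 (cos_pos_of_mem_Ioo ⟨h1, by linarith⟩))
          · refine ⟨fun h => ?_, by linarith, by linarith⟩
            exact (cos_nonpos_of_pi_div_two_le_of_le h1.le (by linarith)).not_gt
              (h.2 (cos_pos_of_mem_Ioo ⟨by linarith, by linarith⟩))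

/-- Among the rotations of a nonzero planar vector `(a, b)`, those separated by the lines orthogonal
to `(1, 0)` and `(cos θ, sin θ)` have measure `2 * θ`. -/
lemma volume_separating_rotations {θ : ℝ} (h0 : 0 ≤ θ) (hπ : θ ≤ π) {a b : ℝ}
    (hab : ¬(a = 0 ∧ b = 0)) :
    volume ({t : ℝ | ¬(0 < cos t * a - sin t * b ↔
        0 < cos θ * (cos t * a - sin t * b) + sin θ * (cos t * b + sin t * a))} ∩
      Set.Ioc 0 (0 + 2 * π)) = ENNReal.ofReal (2 * θ) := by
  set z : ℂ := ⟨a, b⟩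
  have hz : z ≠ 0 := fun h => hab ⟨congrArg Complex.re h, congrArg Complex.im h⟩
  have ha : ‖z‖ * cos z.arg = a := Complex.norm_mul_cos_arg z
  have hb : ‖z‖ * sin z.arg = b := Complex.norm_mul_sin_arg z
  have key : {t : ℝ | ¬(0 < cos t * a - sin t * b ↔
      0 < cos θ * (cos t * a - sin t * b) + sin θ * (cos t * b + sin t * a))} =
      (fun t => t + z.arg) ⁻¹' {t : ℝ | ¬(0 < cos t ↔ 0 < cos (t - θ))} := by
    ext t
    have e1 : cos t * a - sin t * b = ‖z‖ * cos (t + z.arg) := by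
      rw [← ha, ← hb, cos_add]; ring
    have e2 : cos t * b + sin t * a = ‖z‖ * sin (t + z.arg) := by
      rw [← ha, ← hb, sin_add]; ring
    have e3 : cos θ * (‖z‖ * cos (t + z.arg)) + sin θ * (‖z‖ * sin (t + z.arg)) =
        ‖z‖ * cos (t + z.arg - θ) := by
      rw [cos_sub]; ring
    simp only [Set.mem_ofPred_eq, Set.mem_preimage]
    rw [e1, e2, e3, mul_pos_iff_of_pos_left (norm_pos_iff.2 hz),
      mul_pos_iff_of_pos_left (norm_pos_iff.2 hz)]
  have hIoc : Set.Ioc 0 (0 + 2 * π) =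
      (fun t => t + z.arg) ⁻¹' Set.Ioc z.arg (z.arg + 2 * π) := by
    ext t
    simp only [Set.mem_Ioc, Set.mem_preimage]
    constructor <;> rintro ⟨h1, h2⟩ <;> constructor <;> linarith
  rw [key, hIoc, ← Set.preimage_inter, measure_preimage_add_right,
    volume_inter_Ioc_eq_of_periodic two_pi_pos _ _ _ (-(π / 2)), volume_separating_angles h0 hπ]
  · intro t
    simp only [cos_add_two_pi, add_sub_right_comm]
  · measurability

end Circle

section PlaneRotation

open Real

variable {E : Type*} [NormedAddCommGroup E] [InnerProductSpace ℝ E]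

/-- The rotation by the angle `t` in the plane of an orthonormal pair `e, f`, as a linear map. -/
noncomputable def planeRotation (e f : E) (t : ℝ) : E →ₗ[ℝ] E where
  toFun x := x + ((cos t - 1) * ⟪x, e⟫_ℝ - sin t * ⟪x, f⟫_ℝ) • e +
    ((cos t - 1) * ⟪x, f⟫_ℝ + sin t * ⟪x, e⟫_ℝ) • f
  map_add' x y := by
    simp only [inner_add_left]
    module
  map_smul' c x := by
    simp only [real_inner_smul_left, RingHom.id_apply]
    module

lemma planeRotation_apply (e f : E) (t : ℝ) (x : E) :
    planeRotation e f t x = x + ((cos t - 1) * ⟪x, e⟫_ℝ - sin t * ⟪x, f⟫_ℝ) • e +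
      ((cos t - 1) * ⟪x, f⟫_ℝ + sin t * ⟪x, e⟫_ℝ) • f :=
  rfl

variable {e f : E}

lemma inner_planeRotation_left (he : ‖e‖ = 1) (hef : ⟪e, f⟫_ℝ = 0) (t : ℝ) (x : E) :
    ⟪planeRotation e f t x, e⟫_ℝ = cos t * ⟪x, e⟫_ℝ - sin t * ⟪x, f⟫_ℝ := by
  have hfe : ⟪f, e⟫_ℝ = 0 := by rw [real_inner_comm, hef]
  rw [planeRotation_apply]
  simp only [inner_add_left, real_inner_smul_left, real_inner_self_eq_norm_sq, he, hfe]
  ring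

lemma inner_planeRotation_right (hf : ‖f‖ = 1) (hef : ⟪e, f⟫_ℝ = 0) (t : ℝ) (x : E) :
    ⟪planeRotation e f t x, f⟫_ℝ = cos t * ⟪x, f⟫_ℝ + sin t * ⟪x, e⟫_ℝ := by
  rw [planeRotation_apply]
  simp only [inner_add_left, real_inner_smul_left, real_inner_self_eq_norm_sq, hf, hef]
  ring

lemma norm_planeRotation (he : ‖e‖ = 1) (hf : ‖f‖ = 1) (hef : ⟪e, f⟫_ℝ = 0) (t : ℝ) (x : E) :
    ‖planeRotation e f t x‖ = ‖x‖ := by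
  have hsq : ‖planeRotation e f t x‖ ^ 2 = ‖x‖ ^ 2 := by
    rw [← real_inner_self_eq_norm_sq, ← real_inner_self_eq_norm_sq]
    nth_rewrite 2 [planeRotation_apply]
    rw [inner_add_right, inner_add_right, real_inner_smul_right, real_inner_smul_right,
      inner_planeRotation_left he hef, inner_planeRotation_right hf hef, planeRotation_apply]
    simp only [inner_add_left, real_inner_smul_left]
    rw [real_inner_comm x e, real_inner_comm x f]
    linear_combination (⟪x, e⟫_ℝ ^ 2 + ⟪x, f⟫_ℝ ^ 2) * sin_sq_add_cos_sq t
  exact (pow_left_inj₀ (norm_nonneg _) (norm_nonneg _) two_ne_zero).1 hsq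

variable [FiniteDimensional ℝ E] [MeasurableSpace E] [BorelSpace E]

lemma measurePreserving_planeRotation (he : ‖e‖ = 1) (hf : ‖f‖ = 1) (hef : ⟪e, f⟫_ℝ = 0) (t : ℝ) :
    MeasurePreserving (planeRotation e f t) (volume : Measure E) volume :=
  (LinearIsometry.toLinearIsometryEquiv
    ⟨planeRotation e f t, norm_planeRotation he hf hef t⟩ rfl).measurePreserving

/-- The part of the unit ball separated by the hyperplanes orthogonal to `e` and to
`cos θ • e + sin θ • f` takes up the fraction `θ / π`. -/
lemma volume_ball_inter_separating (he : ‖e‖ = 1) (hf : ‖f‖ = 1) (hef : ⟪e, f⟫_ℝ = 0)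
    {θ : ℝ} (h0 : 0 ≤ θ) (hπ : θ ≤ π) :
    volume ({x : E | ¬(0 < ⟪x, e⟫_ℝ ↔ 0 < cos θ * ⟪x, e⟫_ℝ + sin θ * ⟪x, f⟫_ℝ)} ∩
      Metric.ball 0 1) = ENNReal.ofReal (θ / π) * volume (Metric.ball (0 : E) 1) := by
  set A : Set E := {x : E | ¬(0 < ⟪x, e⟫_ℝ ↔ 0 < cos θ * ⟪x, e⟫_ℝ + sin θ * ⟪x, f⟫_ℝ)}
  have hA : MeasurableSet A :=
    MeasurableSet.compl ((measurableSet_lt (by fun_prop) (by fun_prop)).iff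
      (measurableSet_lt (by fun_prop) (by fun_prop)))
  have hcont : Continuous fun p : ℝ × E => planeRotation e f p.1 p.2 := by
    simp only [planeRotation_apply]
    fun_prop
  set M : Set (ℝ × E) := (fun p : ℝ × E => planeRotation e f p.1 p.2) ⁻¹' A
  have hM : MeasurableSet M := hcont.measurable hA
  have hslice (t : ℝ) : volume.restrict (Metric.ball (0 : E) 1) (Prod.mk t ⁻¹' M) =
      volume (A ∩ Metric.ball 0 1) := by
    rw [Measure.restrict_apply (measurable_prodMk_left hM),
      ← (measurePreserving_planeRotation he hf hef t).measure_preimage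
        (hA.inter measurableSet_ball).nullMeasurableSet]
    congr 1
    ext x
    simp [M, norm_planeRotation he hf hef]
  have hne : ∀ᵐ x : E, ¬(⟪x, e⟫_ℝ = 0 ∧ ⟪x, f⟫_ℝ = 0) := by
    have hker : volume ((ℝ ∙ e)ᗮ : Set E) = 0 := by
      refine Measure.addHaar_submodule _ _ fun htop => ?_
      have hmem : e ∈ (ℝ ∙ e)ᗮ := htop ▸ Submodule.mem_top
      have := Submodule.mem_orthogonal_singleton_iff_inner_right.1 hmem
      rw [real_inner_self_eq_norm_sq, he] at this
      norm_num at this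
    refine measure_mono_null (fun x hx => ?_) hker
    simp only [Set.mem_compl_iff, Set.mem_ofPred_eq, not_not] at hx
    exact Submodule.mem_orthogonal_singleton_iff_inner_left.2 hx.1
  have hfiber : ∀ᵐ x ∂(volume.restrict (Metric.ball (0 : E) 1)),
      volume.restrict (Set.Ioc 0 (0 + 2 * π)) ((fun t => (t, x)) ⁻¹' M) =
        ENNReal.ofReal (2 * θ) := by
    filter_upwards [ae_restrict_of_ae hne] with x hx
    rw [Measure.restrict_apply (measurable_prodMk_right hM),
      ← volume_separating_rotations h0 hπ hx]
    simp only [M, A, Set.preimage_ofPred_eq, inner_planeRotation_left he hef,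
      inner_planeRotation_right hf hef]
  have hprod := Measure.prod_apply (μ := volume.restrict (Set.Ioc 0 (0 + 2 * π)))
    (ν := volume.restrict (Metric.ball (0 : E) 1)) hM
  rw [Measure.prod_apply_symm hM, lintegral_congr_ae hfiber] at hprod
  simp only [hslice, lintegral_const, Measure.restrict_apply_univ, Real.volume_Ioc] at hprod
  have h2π : ENNReal.ofReal (0 + 2 * π - 0) ≠ 0 := by simp [pi_pos]
  rw [← ENNReal.mul_left_inj h2π ENNReal.ofReal_ne_top, ← hprod, mul_right_comm,
    ← ENNReal.ofReal_mul (by positivity)]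
  congr 2
  field_simp
  ring

end PlaneRotation

section Sphere

open Real
open scoped Pointwise

variable {E : Type*} [NormedAddCommGroup E] [InnerProductSpace ℝ E]

lemma exists_unit_orthogonal [FiniteDimensional ℝ E] (hd : 2 ≤ Module.finrank ℝ E) (e : E) :
    ∃ f : E, ‖f‖ = 1 ∧ ⟪e, f⟫_ℝ = 0 := by
  have hne : (ℝ ∙ e)ᗮ ≠ ⊥ := fun h => by
    have hsum := (ℝ ∙ e).finrank_add_finrank_orthogonal
    have hle : Module.finrank ℝ (ℝ ∙ e) ≤ 1 := by
      simpa using finrank_span_le_card (R := ℝ) ({e} : Set E)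
    rw [h, finrank_bot] at hsum
    omega
  obtain ⟨w, hw, hw0⟩ := Submodule.exists_mem_ne_zero_of_ne_bot hne
  refine ⟨‖w‖⁻¹ • w, norm_smul_inv_norm hw0, ?_⟩
  rw [real_inner_smul_right, Submodule.mem_orthogonal_singleton_iff_inner_right.1 hw, mul_zero]

/-- In dimension at least two, the second of two nonzero vectors lies at angle `angle u v` from the
first within an oriented orthonormal frame starting with the first. -/
lemma exists_orthonormal_frame [FiniteDimensional ℝ E] (hd : 2 ≤ Module.finrank ℝ E) {u : E}
    (hu : u ≠ 0) (v : E) :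
    ∃ e f : E, ‖e‖ = 1 ∧ ‖f‖ = 1 ∧ ⟪e, f⟫_ℝ = 0 ∧ u = ‖u‖ • e ∧
      v = ‖v‖ • (cos (InnerProductGeometry.angle u v) • e +
        sin (InnerProductGeometry.angle u v) • f) := by
  have hu' : ‖u‖ ≠ 0 := norm_ne_zero_iff.2 hu
  set e : E := ‖u‖⁻¹ • u with he_def
  have he : ‖e‖ = 1 := norm_smul_inv_norm hu
  have hue : u = ‖u‖ • e := by rw [he_def, smul_inv_smul₀ hu']
  set θ := InnerProductGeometry.angle u v
  have hve : ⟪e, v⟫_ℝ = ‖v‖ * cos θ := by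
    rw [he_def, real_inner_smul_left, ← InnerProductGeometry.cos_angle_mul_norm_mul_norm]
    field_simp
    exact mul_comm _ _
  clear_value e
  set w : E := v - (‖v‖ * cos θ) • e with hw_def
  have hew : ⟪e, w⟫_ℝ = 0 := by
    rw [hw_def, inner_sub_right, real_inner_smul_right, hve, real_inner_self_eq_norm_sq, he]
    ring
  have hw : ‖w‖ = ‖v‖ * sin θ := by
    have hsin := InnerProductGeometry.sin_angle_nonneg u v
    have hsq : ‖w‖ ^ 2 = (‖v‖ * sin θ) ^ 2 := by
      rw [hw_def, norm_sub_sq_real, real_inner_smul_right, real_inner_comm, hve, norm_smul, he,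
        mul_one, Real.norm_eq_abs, sq_abs]
      linear_combination (-‖v‖ ^ 2) * sin_sq_add_cos_sq θ
    exact (pow_left_inj₀ (norm_nonneg _) (by positivity) two_ne_zero).1 hsq
  obtain ⟨f, hf, hef, hwf⟩ : ∃ f : E, ‖f‖ = 1 ∧ ⟪e, f⟫_ℝ = 0 ∧ w = ‖w‖ • f := by
    by_cases hw0 : w = 0
    · obtain ⟨f, hf, hef⟩ := exists_unit_orthogonal hd e
      exact ⟨f, hf, hef, by simp [hw0]⟩
    · refine ⟨‖w‖⁻¹ • w, norm_smul_inv_norm hw0, ?_, ?_⟩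
      · rw [real_inner_smul_right, hew, mul_zero]
      · rw [smul_inv_smul₀ (norm_ne_zero_iff.2 hw0)]
  refine ⟨e, f, he, hf, hef, hue, ?_⟩
  rw [smul_add, smul_smul, smul_smul, ← hw, ← hwf, hw_def]
  abel

/-- The open unit sector over the directions separated by `u` and `v` is the separated part of the
unit ball. -/
lemma Ioo_smul_separating_sphere (u v : E) :
    Set.Ioo (0 : ℝ) 1 • ((↑) '' {r : Metric.sphere (0 : E) 1 |
      ¬(0 < ⟪(r : E), u⟫_ℝ ↔ 0 < ⟪(r : E), v⟫_ℝ)} : Set E) =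
    {x : E | ¬(0 < ⟪x, u⟫_ℝ ↔ 0 < ⟪x, v⟫_ℝ)} ∩ Metric.ball 0 1 := by
  have hscale {c : ℝ} (hc : 0 < c) (x : E) :
      (0 < ⟪c • x, u⟫_ℝ ↔ 0 < ⟪c • x, v⟫_ℝ) ↔ (0 < ⟪x, u⟫_ℝ ↔ 0 < ⟪x, v⟫_ℝ) := by
    simp only [real_inner_smul_left, mul_pos_iff_of_pos_left hc]
  ext x
  constructor
  · rintro ⟨c, ⟨hc0, hc1⟩, _, ⟨r, hr, rfl⟩, rfl⟩
    refine ⟨fun h => hr ((hscale hc0 _).1 h), ?_⟩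
    simpa [norm_smul, abs_of_pos hc0] using hc1
  · rintro ⟨hx, hx1⟩
    have hx0 : x ≠ 0 := by
      rintro rfl
      simp at hx
    have hpos : 0 < ‖x‖ := norm_pos_iff.2 hx0
    refine ⟨‖x‖, ⟨hpos, by simpa using hx1⟩, ‖x‖⁻¹ • x,
      ⟨⟨‖x‖⁻¹ • x, ?_⟩, fun h => hx ((hscale (inv_pos.2 hpos) _).1 h), rfl⟩,
      smul_inv_smul₀ hpos.ne' x⟩
    rw [mem_sphere_zero_iff_norm]
    exact norm_smul_inv_norm hx0

end Sphere

/-- For nonzero `u, v` in `ℝ^d` (`d ≥ 2`) at angle `θ = arccos(⟪u,v⟫/(‖u‖·‖v‖))`,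
if `r` is distributed according to the uniform (normalized surface) probability
measure on the unit sphere of `ℝ^d`, then the probability that the hyperplane
with normal `r` separates `u` and `v`, i.e. of `{(⟪r,u⟫ > 0) ≠ (⟪r,v⟫ > 0)}`,
equals `θ/π`. -/
theorem random_hyperplane_separation_sphere (d : ℕ) (hd : 2 ≤ d)
    (u v : EuclideanSpace ℝ (Fin d)) (hu : u ≠ 0) (hv : v ≠ 0) (θ : ℝ)
    (hθ : θ = Real.arccos (⟪u, v⟫_ℝ / (‖u‖ * ‖v‖))) :
    (((volume : Measure (EuclideanSpace ℝ (Fin d))).toSphere Set.univ)⁻¹ •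
        (volume : Measure (EuclideanSpace ℝ (Fin d))).toSphere)
      {r : Metric.sphere (0 : EuclideanSpace ℝ (Fin d)) 1 |
        ¬((0 : ℝ) < ⟪(r : EuclideanSpace ℝ (Fin d)), u⟫_ℝ ↔
          (0 : ℝ) < ⟪(r : EuclideanSpace ℝ (Fin d)), v⟫_ℝ)} =
      ENNReal.ofReal (θ / Real.pi) := by
  have hfin : 2 ≤ Module.finrank ℝ (EuclideanSpace ℝ (Fin d)) := by simpa using hd
  obtain ⟨e, f, he, hf, hef, hue, hvf⟩ := exists_orthonormal_frame hfin hu v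
  have hangle : InnerProductGeometry.angle u v = θ := hθ.symm
  rw [hangle] at hvf
  have hpos (x : EuclideanSpace ℝ (Fin d)) : (0 < ⟪x, u⟫_ℝ ↔ 0 < ⟪x, v⟫_ℝ) ↔
      (0 < ⟪x, e⟫_ℝ ↔ 0 < Real.cos θ * ⟪x, e⟫_ℝ + Real.sin θ * ⟪x, f⟫_ℝ) := by
    rw [hue, hvf]
    simp only [real_inner_smul_right, inner_add_right,
      mul_pos_iff_of_pos_left (norm_pos_iff.2 hu), mul_pos_iff_of_pos_left (norm_pos_iff.2 hv)]
  have hmeas : MeasurableSet {r : Metric.sphere (0 : EuclideanSpace ℝ (Fin d)) 1 |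
      ¬((0 : ℝ) < ⟪(r : EuclideanSpace ℝ (Fin d)), u⟫_ℝ ↔
        (0 : ℝ) < ⟪(r : EuclideanSpace ℝ (Fin d)), v⟫_ℝ)} :=
    MeasurableSet.compl ((measurableSet_lt (by fun_prop) (by fun_prop)).iff
      (measurableSet_lt (by fun_prop) (by fun_prop)))
  have hball := volume_ball_inter_separating he hf hef
    (hangle ▸ InnerProductGeometry.angle_nonneg u v) (hangle ▸ InnerProductGeometry.angle_le_pi u v)
  simp only [← hpos] at hball
  have : Nontrivial (EuclideanSpace ℝ (Fin d)) := ⟨u, 0, hu⟩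
  rw [Measure.smul_apply, smul_eq_mul, Measure.toSphere_apply' _ hmeas,
    Ioo_smul_separating_sphere, hball, mul_left_comm (Module.finrank ℝ _ : ENNReal),
    ← Measure.toSphere_apply_univ,
    mul_left_comm, ENNReal.inv_mul_cancel, mul_one]
  · exact fun h => Measure.toSphere_ne_zero _ (Measure.measure_univ_eq_zero.1 h)
  · exact measure_ne_top _ _
end
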